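/- arXiv:1710.07387 — 3 statements merged into one kernel-verified Lean document; each statement's English description precedes it below -/
import Mathlib

section
/- Christoffel–Darboux formula for Laguerre polynomials: for every real a > -1, every N ≥ 1, and all real x ≠ y, with monic polynomials p_n(x) = (-1)^n n! L_n^a(x) and h_n = n! Γ(a+n+1), one has Σ_{n=0}^{N-1} p_n(x) p_n(y)/h_n = (p_N(x) p_{N-1}(y) - p_{N-1}(x) p_N(y)) / (h_{N-1} (x - y)). -/
/-!
The monic Laguerre polynomials satisfy the three-term recurrence
`p_{n+2}(x) = (x - (2n+3+a)) p_{n+1}(x) - (n+1)(n+1+a) p_n(x)` (`laguerreMonic_recurrence`).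
It is checked coefficient by coefficient from
`p_n(x) = ∑ k, (-1)^(n+k) (n choose k) Γ(n+a+1)/Γ(k+a+1) x^k`, where it reduces to Pascal's rule and
the absorption identity for binomial coefficients (`laguerreCoeff_zero`, `laguerreCoeff_succ`).

The norms satisfy `h_{n+1} = (n+1)(n+1+a) h_n`, with the same factor that multiplies `p_n` in the
recurrence. Hence the recurrence makes `(p_{n+1}(x) p_n(y) - p_n(x) p_{n+1}(y)) / h_n` increase by
`(x - y) p_{n+1}(x) p_{n+1}(y) / h_{n+1}` from `n` to `n + 1`, and the sum telescopes.
-/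

open Nat

/-- The generalized Laguerre polynomial
`L_n^a(x) = Σ_{k=0}^{n} (-1)^k (Γ(n+a+1)/(Γ(k+a+1) (n-k)! k!)) x^k`. -/
noncomputable def laguerreP (a : ℝ) (n : ℕ) (x : ℝ) : ℝ :=
  ∑ k ∈ Finset.range (n + 1),
    (-1 : ℝ) ^ k *
      (Real.Gamma (n + a + 1) / (Real.Gamma (k + a + 1) * (n - k)! * k !)) * x ^ k

/-- The monic Laguerre polynomial `p_n(x) = (-1)^n n! L_n^a(x)`. -/
noncomputable def laguerreMonic (a : ℝ) (n : ℕ) (x : ℝ) : ℝ :=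
  (-1 : ℝ) ^ n * n ! * laguerreP a n x

/-- The normalisation constant `h_n = n! Γ(a+n+1)`. -/
noncomputable def laguerreNorm (a : ℝ) (n : ℕ) : ℝ := n ! * Real.Gamma (a + n + 1)

/-- The coefficient of `x^k` in the monic Laguerre polynomial `p_n`. The binomial coefficient
makes it vanish for `k > n`, so that it can be summed over any range containing `0, …, n`. -/
noncomputable def laguerreCoeff (a : ℝ) (n k : ℕ) : ℝ :=
  (-1 : ℝ) ^ (n + k) * n.choose k * (Real.Gamma (n + a + 1) / Real.Gamma (k + a + 1))

lemma laguerreMonic_eq_sum (a : ℝ) (n : ℕ) (x : ℝ) :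
    laguerreMonic a n x = ∑ k ∈ Finset.range (n + 1), laguerreCoeff a n k * x ^ k := by
  unfold laguerreMonic laguerreP laguerreCoeff
  rw [Finset.mul_sum]
  refine Finset.sum_congr rfl fun k hk => ?_
  rw [Nat.cast_choose ℝ (Nat.lt_succ_iff.mp (Finset.mem_range.mp hk)), pow_add]
  simp only [div_eq_mul_inv, mul_inv]
  ring

lemma laguerreCoeff_eq_zero (a : ℝ) {n k : ℕ} (h : n < k) : laguerreCoeff a n k = 0 := by
  simp [laguerreCoeff, Nat.choose_eq_zero_of_lt h]

lemma gamma_succ_shift {a : ℝ} (ha : -1 < a) (n : ℕ) :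
    Real.Gamma (((n + 1 : ℕ) : ℝ) + a + 1) = (n + a + 1) * Real.Gamma (n + a + 1) := by
  have hn : (0 : ℝ) ≤ n := n.cast_nonneg
  rw [← Real.Gamma_add_one (by linarith)]
  congr 1
  push_cast
  ring

lemma gamma_shift_ne_zero {a : ℝ} (ha : -1 < a) (n : ℕ) : Real.Gamma (n + a + 1) ≠ 0 := by
  have hn : (0 : ℝ) ≤ n := n.cast_nonneg
  exact (Real.Gamma_pos_of_pos (by linarith)).ne'

/-- The constant coefficient of the three-term recurrence. -/
lemma laguerreCoeff_zero {a : ℝ} (ha : -1 < a) (n : ℕ) :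
    laguerreCoeff a (n + 2) 0 =
      -(2 * n + 3 + a) * laguerreCoeff a (n + 1) 0
        - (n + 1) * (n + 1 + a) * laguerreCoeff a n 0 := by
  unfold laguerreCoeff
  rw [gamma_succ_shift ha (n + 1), gamma_succ_shift ha n]
  simp only [Nat.choose_zero_right, pow_succ, pow_add]
  push_cast
  ring

/-- The coefficient of `x^(k+1)` in the three-term recurrence. -/
lemma laguerreCoeff_succ {a : ℝ} (ha : -1 < a) (n k : ℕ) :
    laguerreCoeff a (n + 2) (k + 1) =
      laguerreCoeff a (n + 1) k - (2 * n + 3 + a) * laguerreCoeff a (n + 1) (k + 1)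
        - (n + 1) * (n + 1 + a) * laguerreCoeff a n (k + 1) := by
  have hk : (0 : ℝ) ≤ k := k.cast_nonneg
  have hka : (k : ℝ) + a + 1 ≠ 0 := by linarith
  have hG := gamma_shift_ne_zero ha k
  have pascal₁ : ((n + 2).choose (k + 1) : ℝ) = (n + 1).choose k + (n + 1).choose (k + 1) := by
    exact_mod_cast Nat.choose_succ_succ (n + 1) k
  have pascal₂ : ((n + 1).choose (k + 1) : ℝ) = n.choose k + n.choose (k + 1) := by
    exact_mod_cast Nat.choose_succ_succ n k
  have absorb₁ : ((n : ℝ) + 2) * (n + 1).choose k = (n + 2).choose (k + 1) * (k + 1) := by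
    exact_mod_cast Nat.add_one_mul_choose_eq (n + 1) k
  have absorb₂ : ((n : ℝ) + 1) * n.choose k = (n + 1).choose (k + 1) * (k + 1) := by
    exact_mod_cast Nat.add_one_mul_choose_eq n k
  have key : ((n : ℝ) + 2 + a) * (n + 2).choose (k + 1) =
      (k + a + 1) * (n + 1).choose k + (2 * n + 3 + a) * (n + 1).choose (k + 1)
        - (n + 1) * n.choose (k + 1) := by
    linear_combination (n + 2 + a + (k + 1)) * pascal₁ + absorb₁ - absorb₂ - (n + 1) * pascal₂
  unfold laguerreCoeff
  rw [gamma_succ_shift ha (n + 1), gamma_succ_shift ha n, gamma_succ_shift ha k]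
  simp only [pow_succ, pow_add]
  push_cast
  field_simp
  linear_combination -(n + 1 + a) * Real.Gamma (n + a + 1) * key

lemma laguerreMonic_recurrence {a : ℝ} (ha : -1 < a) (n : ℕ) (x : ℝ) :
    laguerreMonic a (n + 2) x =
      (x - (2 * n + 3 + a)) * laguerreMonic a (n + 1) x
        - (n + 1) * (n + 1 + a) * laguerreMonic a n x := by
  -- All three polynomials are summed over the common range `0, …, n + 2`, except for the copy of
  -- `p_{n+1}` multiplied by `x`, whose coefficients are shifted by one.
  have h₁ : laguerreMonic a (n + 1) x =
      ∑ k ∈ Finset.range (n + 2), laguerreCoeff a (n + 1) (k + 1) * x ^ (k + 1)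
        + laguerreCoeff a (n + 1) 0 := by
    rw [laguerreMonic_eq_sum, ← mul_one (laguerreCoeff a (n + 1) 0), ← pow_zero x,
      ← Finset.sum_range_succ' (fun k => laguerreCoeff a (n + 1) k * x ^ k),
      Finset.sum_range_succ _ (n + 2), laguerreCoeff_eq_zero a (by omega : n + 1 < n + 2)]
    simp
  have h₀ : laguerreMonic a n x =
      ∑ k ∈ Finset.range (n + 2), laguerreCoeff a n (k + 1) * x ^ (k + 1)
        + laguerreCoeff a n 0 := by
    rw [laguerreMonic_eq_sum, ← mul_one (laguerreCoeff a n 0), ← pow_zero x,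
      ← Finset.sum_range_succ' (fun k => laguerreCoeff a n k * x ^ k),
      Finset.sum_range_succ _ (n + 2), Finset.sum_range_succ _ (n + 1),
      laguerreCoeff_eq_zero a (by omega : n < n + 2),
      laguerreCoeff_eq_zero a (by omega : n < n + 1)]
    simp
  have hx : x * laguerreMonic a (n + 1) x =
      ∑ k ∈ Finset.range (n + 2), laguerreCoeff a (n + 1) k * x ^ (k + 1) := by
    rw [laguerreMonic_eq_sum, Finset.mul_sum]
    exact Finset.sum_congr rfl fun k _ => by ring
  rw [sub_mul, hx, h₁, h₀, laguerreMonic_eq_sum, Finset.sum_range_succ', laguerreCoeff_zero ha]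
  simp only [laguerreCoeff_succ ha, sub_mul, Finset.sum_sub_distrib, mul_assoc, ← Finset.mul_sum]
  ring

lemma laguerreMonic_zero {a : ℝ} (ha : -1 < a) (x : ℝ) : laguerreMonic a 0 x = 1 := by
  have hG := gamma_shift_ne_zero ha 0
  rw [laguerreMonic_eq_sum]
  simp [laguerreCoeff, div_self (by simpa using hG)]

lemma laguerreMonic_one {a : ℝ} (ha : -1 < a) (x : ℝ) : laguerreMonic a 1 x = x - (a + 1) := by
  have hG₀ := gamma_shift_ne_zero ha 0
  have hG₁ := gamma_shift_ne_zero ha 1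
  have h := gamma_succ_shift ha 0
  rw [laguerreMonic_eq_sum]
  simp only [Finset.sum_range_succ, Finset.sum_range_zero, laguerreCoeff]
  rw [div_self hG₁, h, mul_div_cancel_right₀ _ hG₀]
  simp
  ring

lemma laguerreNorm_succ {a : ℝ} (ha : -1 < a) (n : ℕ) :
    laguerreNorm a (n + 1) = (n + 1) * (n + 1 + a) * laguerreNorm a n := by
  unfold laguerreNorm
  rw [add_comm a, add_comm a, gamma_succ_shift ha, Nat.factorial_succ]
  push_cast
  ring

lemma laguerreNorm_ne_zero {a : ℝ} (ha : -1 < a) (n : ℕ) : laguerreNorm a n ≠ 0 := by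
  unfold laguerreNorm
  rw [add_comm a]
  exact mul_ne_zero (Nat.cast_ne_zero.mpr n.factorial_ne_zero) (gamma_shift_ne_zero ha n)

/-- Christoffel–Darboux formula for the (monic) Laguerre polynomials: for `a > -1`, `N ≥ 1`
and `x ≠ y`, `Σ_{n=0}^{N-1} p_n(x)p_n(y)/h_n
  = (p_N(x)p_{N-1}(y) - p_{N-1}(x)p_N(y))/(h_{N-1}(x-y))`. -/
theorem laguerre_christoffel_darboux (a : ℝ) (ha : -1 < a) (N : ℕ) (hN : 1 ≤ N)
    (x y : ℝ) (hxy : x ≠ y) :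
    ∑ n ∈ Finset.range N, laguerreMonic a n x * laguerreMonic a n y / laguerreNorm a n
      = (laguerreMonic a N x * laguerreMonic a (N - 1) y -
          laguerreMonic a (N - 1) x * laguerreMonic a N y) /
            (laguerreNorm a (N - 1) * (x - y)) := by
  obtain ⟨n, rfl⟩ : ∃ n, N = n + 1 := ⟨N - 1, by omega⟩
  clear hN
  rw [Nat.add_sub_cancel]
  have hxy' : x - y ≠ 0 := sub_ne_zero.mpr hxy
  induction n with
  | zero =>
    have h₀ := laguerreNorm_ne_zero ha 0
    simp only [zero_add, Finset.sum_range_one, laguerreMonic_zero ha, laguerreMonic_one ha]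
    field_simp
    ring
  | succ n ih =>
    have hn : (0 : ℝ) ≤ n := n.cast_nonneg
    have h₀ := laguerreNorm_ne_zero ha n
    have h₁ : (n : ℝ) + 1 ≠ 0 := by positivity
    have h₂ : (n : ℝ) + 1 + a ≠ 0 := by linarith
    rw [Finset.sum_range_succ, ih, laguerreMonic_recurrence ha n x,
      laguerreMonic_recurrence ha n y, laguerreNorm_succ ha]
    field_simp
    ring
end

section
/- The spectral density of the N×N GUE satisfies a third-order linear differential equation: let σ(x) = ρ_N^G(x) = e^{-x²} Σ_{n=0}^{N-1} H_n(x)²/(√π 2^n n!). Then for every real x, σ'''(x) - 4x (x σ'(x) - σ(x)) + 8N σ'(x) = 0. -/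
/-!
Write `N = m + 1`, `A = H_N`, `B = H_{N-1}` and `c = 1 / (√π 2^{N-1} (N-1)!)`. Hermite polynomials
satisfy `A' = 2N B` and `B' = 2x B - A` (`hermiteP_hasDerivAt`), and the confluent
Christoffel–Darboux formula (`sum_hermiteP_sq`) collapses the density to
`σ = c e^{-x²} (N B² + A²/2 - x A B)`. All but one term cancel on differentiating this, leaving
`σ' = -c e^{-x²} A B` (`rhoG_hasDerivAt`). Two further derivatives give
`σ''' = -c e^{-x²} (4N x B² - 8N A B + 2x A²)`, and the differential equation becomes a polynomial
identity in `x`, `A`, `B`.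
-/

open Nat

/-- The physicists' Hermite polynomials: `H 0 x = 1`, `H 1 x = 2x`,
`H (n+1) x = 2x * H n x - 2n * H (n-1) x`. -/
noncomputable def hermiteP : ℕ → ℝ → ℝ
  | 0, _ => 1
  | 1, x => 2 * x
  | (n + 2), x => 2 * x * hermiteP (n + 1) x - 2 * (n + 1) * hermiteP n x

/-- The GUE spectral density `ρ_N^G(x) = e^{-x²} Σ_{n<N} H_n(x)²/(√π 2^n n!)`. -/
noncomputable def rhoG (N : ℕ) (x : ℝ) : ℝ :=
  Real.exp (-x ^ 2) *
    ∑ n ∈ Finset.range N, (hermiteP n x) ^ 2 / (Real.sqrt Real.pi * 2 ^ n * n !)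

/-- The lowering and raising relations `H_{n+1}' = 2(n+1) H_n` and `H_n' = 2x H_n - H_{n+1}`,
proved together because each feeds the induction step of the other. -/
lemma hermiteP_hasDerivAt (n : ℕ) (x : ℝ) :
    HasDerivAt (hermiteP n) (2 * x * hermiteP n x - hermiteP (n + 1) x) x ∧
      HasDerivAt (hermiteP (n + 1)) (2 * (n + 1) * hermiteP n x) x := by
  induction n with
  | zero =>
    have h0 : hermiteP 0 = fun _ => 1 := by funext y; simp [hermiteP]
    have h1 : hermiteP (0 + 1) = fun y => 2 * y := by funext y; simp [hermiteP]
    rw [h0, h1]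
    constructor
    · refine HasDerivAt.congr_deriv (hasDerivAt_const x (1 : ℝ)) ?_
      ring
    · refine HasDerivAt.congr_deriv ((hasDerivAt_id' x).const_mul (2 : ℝ)) ?_
      simp
  | succ n ih =>
    obtain ⟨ih₀, ih₁⟩ := ih
    constructor
    · refine HasDerivAt.congr_deriv ih₁ ?_
      rw [hermiteP]
      ring
    · have h2 : hermiteP (n + 1 + 1)
          = fun y => 2 * y * hermiteP (n + 1) y - 2 * (n + 1) * hermiteP n y := by
        funext y; rw [hermiteP]
      rw [h2]
      refine HasDerivAt.congr_deriv ((((hasDerivAt_id' x).const_mul (2 : ℝ)).fun_mul ih₁).fun_sub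
        (ih₀.const_mul (2 * ((n : ℝ) + 1)))) ?_
      push_cast
      ring

/-- The confluent Christoffel–Darboux formula, with `H_{m+2}` eliminated by the recurrence. -/
lemma sum_hermiteP_sq (m : ℕ) (x : ℝ) :
    ∑ n ∈ Finset.range (m + 1), (hermiteP n x) ^ 2 / (Real.sqrt Real.pi * 2 ^ n * n !)
      = 1 / (Real.sqrt Real.pi * 2 ^ m * m !) *
        ((m + 1) * hermiteP m x ^ 2 + hermiteP (m + 1) x ^ 2 / 2
          - x * hermiteP (m + 1) x * hermiteP m x) := by
  have hpi : Real.sqrt Real.pi ≠ 0 := (Real.sqrt_pos.mpr Real.pi_pos).ne'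
  induction m with
  | zero =>
    simp [hermiteP]
    ring
  | succ m ih =>
    have hfac : (m ! : ℝ) ≠ 0 := by positivity
    have hm : (m : ℝ) + 1 ≠ 0 := by positivity
    have hrec : hermiteP (m + 1 + 1) x
        = 2 * x * hermiteP (m + 1) x - 2 * (m + 1) * hermiteP m x := by rw [hermiteP]
    rw [Finset.sum_range_succ, ih, hrec, Nat.factorial_succ]
    push_cast
    field_simp
    ring

lemma hasDerivAt_exp_neg_sq (x : ℝ) :
    HasDerivAt (fun y : ℝ => Real.exp (-y ^ 2)) (-2 * x * Real.exp (-x ^ 2)) x := by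
  refine HasDerivAt.congr_deriv (((hasDerivAt_id' x).fun_pow 2).fun_neg.exp) ?_
  simp
  ring

/-- All but one term cancel in the derivative of the summed density:
`σ' = -c e^{-x²} H_N H_{N-1}` with `N = m + 1`. -/
lemma rhoG_hasDerivAt (m : ℕ) (x : ℝ) :
    HasDerivAt (rhoG (m + 1))
      (-(1 / (Real.sqrt Real.pi * 2 ^ m * m !)) *
        (Real.exp (-x ^ 2) * (hermiteP (m + 1) x * hermiteP m x))) x := by
  have hfun : rhoG (m + 1) = fun y => Real.exp (-y ^ 2) *
      (1 / (Real.sqrt Real.pi * 2 ^ m * m !) *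
        ((m + 1) * hermiteP m y ^ 2 + hermiteP (m + 1) y ^ 2 / 2
          - y * hermiteP (m + 1) y * hermiteP m y)) := by
    funext y
    rw [rhoG, sum_hermiteP_sq]
  rw [hfun]
  obtain ⟨hB, hA⟩ := hermiteP_hasDerivAt m x
  refine HasDerivAt.congr_deriv ((hasDerivAt_exp_neg_sq x).fun_mul
    (((((hB.fun_pow 2).const_mul ((m : ℝ) + 1)).fun_add ((hA.fun_pow 2).div_const 2)).fun_sub
      (((hasDerivAt_id' x).fun_mul hA).fun_mul hB)).const_mul
        (1 / (Real.sqrt Real.pi * 2 ^ m * m !)))) ?_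
  push_cast
  ring

/-- The GUE spectral density `σ = ρ_N^G` satisfies the third-order linear ODE
`σ''' - 4x(xσ' - σ) + 8Nσ' = 0`. -/
theorem rhoG_linear_ode (N : ℕ) (hN : 1 ≤ N) (x : ℝ) :
    iteratedDeriv 3 (rhoG N) x
      - 4 * x * (x * deriv (rhoG N) x - rhoG N x)
      + 8 * N * deriv (rhoG N) x = 0 := by
  obtain ⟨m, rfl⟩ : ∃ m, N = m + 1 := ⟨N - 1, by omega⟩
  have hd1 : deriv (rhoG (m + 1)) = fun y => -(1 / (Real.sqrt Real.pi * 2 ^ m * m !)) *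
      (Real.exp (-y ^ 2) * (hermiteP (m + 1) y * hermiteP m y)) :=
    funext fun y => (rhoG_hasDerivAt m y).deriv
  have hσ : rhoG (m + 1) x = Real.exp (-x ^ 2) *
      (1 / (Real.sqrt Real.pi * 2 ^ m * m !) *
        ((m + 1) * hermiteP m x ^ 2 + hermiteP (m + 1) x ^ 2 / 2
          - x * hermiteP (m + 1) x * hermiteP m x)) := by
    rw [rhoG, sum_hermiteP_sq]
  rw [iteratedDeriv_succ', iteratedDeriv_succ', iteratedDeriv_one, hd1, hσ]
  generalize 1 / (Real.sqrt Real.pi * 2 ^ m * m !) = c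
  have hd2 : deriv (fun y => -c * (Real.exp (-y ^ 2) * (hermiteP (m + 1) y * hermiteP m y)))
      = fun y => -c * (Real.exp (-y ^ 2) *
        (2 * (m + 1) * hermiteP m y ^ 2 - hermiteP (m + 1) y ^ 2)) := by
    funext y
    obtain ⟨hB, hA⟩ := hermiteP_hasDerivAt m y
    rw [(((hasDerivAt_exp_neg_sq y).fun_mul (hA.fun_mul hB)).const_mul (-c)).deriv]
    ring
  obtain ⟨hB, hA⟩ := hermiteP_hasDerivAt m x
  rw [hd2, (((hasDerivAt_exp_neg_sq x).fun_mul
    (((hB.fun_pow 2).const_mul (2 * ((m : ℝ) + 1))).fun_sub (hA.fun_pow 2))).const_mul (-c)).deriv]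
  push_cast
  ring
end

section
/- The Laguerre spectral density satisfies a third-order linear differential equation: let a > -1 and N ≥ 1, and let σ(x) = ρ_N^L(x) = x^a e^{-x} Σ_{n=0}^{N-1} (n!/Γ(a+n+1)) L_n^a(x)². Then for every x > 0, x³ σ'''(x) + 4x² σ''(x) - x (x² - 2(2N+a)x + a² - 2) σ'(x) + ((2N+a)x - a²) σ(x) = 0. -/
/-!
The proof rests on the two first-order structure relations
`x L_{n+1}' = (n+1) L_{n+1} - (n+1+a) L_n` and `x L_n' = (n+1) L_{n+1} - (n+1+a-x) L_n`
(`laguerreP_deriv_succ`, `laguerreP_deriv`), which are checked coefficientwise.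

Write `N = n + 1`, `u = L_N`, `v = L_{N-1}`, `w = x^a e^{-x}` and `κ = N!/Γ(N+a)`.
Equating the two relations gives the three-term recurrence, and with it the confluent
Christoffel–Darboux formula (`christoffel_darboux`)
`x σ = κ w (N u² - (2N+a-x) u v + (N+a) v²)`.
Put `A = κ w u v` and `B = κ w (N u² - (N+a) v²)`. By the structure relations, `σ, A, B` satisfy
the closed linear system
`x σ' = A - σ`, `x A' = B`, `x B' = s (x σ + s A) - 4 N (N+a) A` with `s = 2N + a - x`,
and eliminating `A` and `B` yields the third-order equation (`ode_of_system`).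
-/

open Nat

/-- The LUE spectral density `ρ_N^L(x) = x^a e^{-x} Σ_{n<N} (n!/Γ(a+n+1)) L_n^a(x)²`. -/
noncomputable def rhoL (a : ℝ) (N : ℕ) (x : ℝ) : ℝ :=
  x ^ a * Real.exp (-x) *
    ∑ n ∈ Finset.range N, (n ! / Real.Gamma (a + n + 1)) * (laguerreP a n x) ^ 2

open Filter Topology

/-- The coefficient of `x^k` in `L_n^a`, written with a binomial coefficient so that it vanishes
for `k > n`; sums over different ranges can then be compared termwise. -/
noncomputable def lagCoeff (a : ℝ) (n k : ℕ) : ℝ :=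
  (-1 : ℝ) ^ k * (Real.Gamma (n + a + 1) / (Real.Gamma (k + a + 1) * n !)) * n.choose k

lemma laguerreP_eq_sum (a : ℝ) {n M : ℕ} (h : n + 1 ≤ M) (x : ℝ) :
    laguerreP a n x = ∑ k ∈ Finset.range M, lagCoeff a n k * x ^ k := by
  unfold laguerreP
  rw [← Finset.sum_subset (Finset.range_mono h)]
  · refine Finset.sum_congr rfl fun k hk => ?_
    have hk : k ≤ n := by simpa [Nat.lt_succ_iff] using hk
    have h1 : (n.choose k : ℝ) * k ! * (n - k)! = n ! := by
      exact_mod_cast Nat.choose_mul_factorial_mul_factorial hk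
    have h2 : (k ! : ℝ) ≠ 0 := by positivity
    have h3 : ((n - k)! : ℝ) ≠ 0 := by positivity
    have h4 : (n.choose k : ℝ) ≠ 0 := by exact_mod_cast (Nat.choose_pos hk).ne'
    unfold lagCoeff
    rw [← h1]
    field_simp
  · intro k _ hk
    have hk : n < k := by simpa [Nat.lt_succ_iff] using hk
    simp [lagCoeff, Nat.choose_eq_zero_of_lt hk]

lemma gamma_step {a : ℝ} (ha : -1 < a) (n : ℕ) :
    Real.Gamma ((n + 1 : ℕ) + a + 1) = (n + 1 + a) * Real.Gamma (n + a + 1) := by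
  have : (n : ℝ) + a + 1 ≠ 0 := by have := n.cast_nonneg (α := ℝ); linarith
  rw [show ((n + 1 : ℕ) : ℝ) + a + 1 = (n + a + 1) + 1 by push_cast; ring,
    Real.Gamma_add_one this]
  ring

lemma gamma_pos' {a : ℝ} (ha : -1 < a) (n : ℕ) : 0 < Real.Gamma (n + a + 1) :=
  Real.Gamma_pos_of_pos (by have := n.cast_nonneg (α := ℝ); linarith)

lemma lagCoeff_succ_left {a : ℝ} (ha : -1 < a) (n k : ℕ) :
    (n + 1 - k : ℝ) * lagCoeff a (n + 1) k = (n + 1 + a) * lagCoeff a n k := by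
  have hc : (n + 1 - k : ℝ) * (n + 1).choose k = (n + 1) * n.choose k := by
    rcases le_or_gt k (n + 1) with h | h
    · have := Nat.choose_mul_succ_eq n k
      have h' : ((n.choose k * (n + 1) : ℕ) : ℝ) = ((n + 1).choose k * (n + 1 - k) : ℕ) := by
        rw [this]
      push_cast [Nat.cast_sub h] at h'
      linarith
    · simp [Nat.choose_eq_zero_of_lt h, Nat.choose_eq_zero_of_lt (show n < k by omega)]
  have h1 := (gamma_pos' ha k).ne'
  have h2 : (n ! : ℝ) ≠ 0 := by positivity
  have h3 : (n + 1 : ℝ) ≠ 0 := by positivity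
  unfold lagCoeff
  rw [gamma_step ha, Nat.factorial_succ]
  push_cast
  field_simp
  linear_combination (n + 1 + a) * Real.Gamma (n + a + 1) * hc

lemma lagCoeff_succ_right {a : ℝ} (ha : -1 < a) (n k : ℕ) :
    (k + 1 : ℝ) * lagCoeff a n (k + 1)
      = (k + 1) * lagCoeff a (n + 1) (k + 1) + lagCoeff a n k := by
  have hc1 : (n + 1 : ℝ) * n.choose k = (n + 1).choose (k + 1) * (k + 1) := by
    exact_mod_cast Nat.add_one_mul_choose_eq n k
  have hc2 : (n.choose (k + 1) : ℝ) * (k + 1) = n.choose k * (n - k) := by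
    rcases le_or_gt k n with h | h
    · have h' : ((n.choose (k + 1) * (k + 1) : ℕ) : ℝ) = (n.choose k * (n - k) : ℕ) := by
        rw [Nat.choose_succ_right_eq]
      push_cast [Nat.cast_sub h] at h'
      exact h'
    · simp [Nat.choose_eq_zero_of_lt h, Nat.choose_eq_zero_of_lt (show n < k + 1 by omega)]
  have h1 := (gamma_pos' ha k).ne'
  have h2 : (n ! : ℝ) ≠ 0 := by positivity
  have h3 : (n + 1 : ℝ) ≠ 0 := by positivity
  have h4 : (k + 1 + a : ℝ) ≠ 0 := by have := k.cast_nonneg (α := ℝ); linarith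
  unfold lagCoeff
  rw [gamma_step ha, gamma_step ha, Nat.factorial_succ, pow_succ]
  push_cast
  field_simp
  linear_combination Real.Gamma (n + a + 1) * (-(n + 1 : ℝ) * hc2 - (n + 1 + a) * hc1)

lemma laguerreP_differentiable (a : ℝ) (n : ℕ) (x : ℝ) :
    DifferentiableAt ℝ (laguerreP a n) x := by
  unfold laguerreP
  fun_prop

lemma mul_deriv_laguerreP (a : ℝ) {n M : ℕ} (h : n + 1 ≤ M) (x : ℝ) :
    x * deriv (laguerreP a n) x = ∑ k ∈ Finset.range M, k * lagCoeff a n k * x ^ k := by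
  have hf : laguerreP a n = fun x => ∑ k ∈ Finset.range M, lagCoeff a n k * x ^ k :=
    funext fun x => laguerreP_eq_sum a h x
  have hd : HasDerivAt (laguerreP a n)
      (∑ k ∈ Finset.range M, lagCoeff a n k * (k * x ^ (k - 1))) x := by
    rw [hf]
    exact HasDerivAt.fun_sum fun k _ => (hasDerivAt_pow k x).const_mul _
  rw [hd.deriv, Finset.mul_sum]
  refine Finset.sum_congr rfl fun k _ => ?_
  rcases k with _ | k
  · simp
  · simp only [Nat.add_sub_cancel, pow_succ]
    ring

lemma laguerreP_deriv_succ {a : ℝ} (ha : -1 < a) (n : ℕ) (x : ℝ) :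
    x * deriv (laguerreP a (n + 1)) x
      = (n + 1) * laguerreP a (n + 1) x - (n + 1 + a) * laguerreP a n x := by
  rw [mul_deriv_laguerreP a le_rfl, laguerreP_eq_sum a (n := n + 1) le_rfl,
    laguerreP_eq_sum a (n := n) (M := n + 1 + 1) (by omega), Finset.mul_sum, Finset.mul_sum,
    ← Finset.sum_sub_distrib]
  refine Finset.sum_congr rfl fun k _ => ?_
  linear_combination (-x ^ k) * lagCoeff_succ_left ha n k

lemma laguerreP_deriv {a : ℝ} (ha : -1 < a) (n : ℕ) (x : ℝ) :
    x * deriv (laguerreP a n) x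
      = (n + 1) * laguerreP a (n + 1) x - (n + 1 + a - x) * laguerreP a n x := by
  -- the coefficient identity sums to `x L_n' = x L_{n+1}' + x L_n`
  have key : x * deriv (laguerreP a n) x
      = x * deriv (laguerreP a (n + 1)) x + x * laguerreP a n x := by
    rw [mul_deriv_laguerreP a (n := n) (M := n + 1 + 1) (by omega),
      mul_deriv_laguerreP a (n := n + 1) (M := n + 1 + 1) le_rfl,
      laguerreP_eq_sum a (n := n) le_rfl, Finset.sum_range_succ' _ (n + 1),
      Finset.sum_range_succ' _ (n + 1), Finset.mul_sum]
    simp only [Nat.cast_zero, zero_mul, add_zero]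
    rw [← Finset.sum_add_distrib]
    refine Finset.sum_congr rfl fun k _ => ?_
    push_cast
    linear_combination x ^ (k + 1) * lagCoeff_succ_right ha n k
  rw [key, laguerreP_deriv_succ ha]
  ring

lemma laguerreP_three_term {a : ℝ} (ha : -1 < a) (n : ℕ) (x : ℝ) :
    (n + 2) * laguerreP a (n + 2) x
      = (2 * n + 3 + a - x) * laguerreP a (n + 1) x - (n + 1 + a) * laguerreP a n x := by
  have h1 := laguerreP_deriv_succ ha n x
  have h2 := laguerreP_deriv ha (n + 1) x
  push_cast at h2
  linear_combination h1 - h2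

/-- Confluent Christoffel–Darboux formula, with the derivatives expressed through
`L_{n+1}` and `L_n`. -/
lemma christoffel_darboux {a : ℝ} (ha : -1 < a) (n : ℕ) (x : ℝ) :
    x * ∑ i ∈ Finset.range (n + 1), (i ! / Real.Gamma (a + i + 1)) * (laguerreP a i x) ^ 2
      = ((n + 1)! / Real.Gamma (a + n + 1)) *
        ((n + 1) * laguerreP a (n + 1) x ^ 2
          - (2 * (n + 1) + a - x) * (laguerreP a (n + 1) x * laguerreP a n x)
          + (n + 1 + a) * laguerreP a n x ^ 2) := by
  induction n with
  | zero =>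
    have h0 : laguerreP a 0 x = 1 := by
      have := (gamma_pos' ha 0).ne'
      simp only [Nat.cast_zero, zero_add] at this
      simp [laguerreP, this]
    have h1 : laguerreP a 1 x = 1 + a - x := by
      have hA := laguerreP_deriv_succ ha 0 x
      have hB := laguerreP_deriv ha 0 x
      have : deriv (laguerreP a 0) x = 0 := by
        have hc : laguerreP a 0 = fun _ => 1 := by
          funext y
          have := (gamma_pos' ha 0).ne'
          simp only [Nat.cast_zero, zero_add] at this
          simp [laguerreP, this]
        rw [hc]; simp
      rw [this, h0] at hB
      simp at hB
      linarith
    simp [h0, h1]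
    ring
  | succ n ih =>
    rw [Finset.sum_range_succ, mul_add, ih]
    have h3 := laguerreP_three_term ha n x
    have hg : Real.Gamma (a + (n + 1 : ℕ) + 1) = (n + 1 + a) * Real.Gamma (a + n + 1) := by
      have := gamma_step ha n
      rw [add_comm a, add_comm a]
      exact this
    have hg0 : Real.Gamma (a + n + 1) ≠ 0 := by
      rw [add_comm a]; exact (gamma_pos' ha n).ne'
    have h4 : (n + 1 + a : ℝ) ≠ 0 := by have := n.cast_nonneg (α := ℝ); linarith
    have h2 : (n + 2 : ℝ) ≠ 0 := by positivity
    have ht : laguerreP a (n + 1 + 1) x = ((2 * n + 3 + a - x) * laguerreP a (n + 1) x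
        - (n + 1 + a) * laguerreP a n x) / (n + 2) := by
      rw [eq_div_iff h2, ← h3]; ring
    rw [ht, hg, Nat.factorial_succ (n + 1)]
    push_cast
    rw [show (n : ℝ) + 1 + 1 = n + 2 by ring]
    field_simp
    ring

/-- Elimination step: the first component of the linear system for `(f, A, B)` satisfies
the third-order equation. -/
lemma ode_of_system {a N : ℝ} {f A B : ℝ → ℝ}
    (hf : ∀ x, 0 < x → HasDerivAt f ((A x - f x) / x) x)
    (hA : ∀ x, 0 < x → HasDerivAt A (B x / x) x)
    (hB : ∀ x, 0 < x → HasDerivAt B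
      (((2 * N + a - x) * (x * f x + (2 * N + a - x) * A x) - 4 * N * (N + a) * A x) / x) x)
    {x : ℝ} (hx : 0 < x) :
    x ^ 3 * iteratedDeriv 3 f x + 4 * x ^ 2 * iteratedDeriv 2 f x
      - x * (x ^ 2 - 2 * (2 * N + a) * x + a ^ 2 - 2) * deriv f x
      + ((2 * N + a) * x - a ^ 2) * f x = 0 := by
  have hev : ∀ y : ℝ, 0 < y → ∀ᶠ z in 𝓝 y, 0 < z := fun y hy => lt_mem_nhds hy
  have d1 : ∀ y, 0 < y → deriv f y = (A y - f y) / y := fun y hy => (hf y hy).deriv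
  have d2 : ∀ y, 0 < y → deriv (deriv f) y = (B y - 2 * A y + 2 * f y) / y ^ 2 := by
    intro y hy
    have e : deriv f =ᶠ[𝓝 y] fun z => (A z - f z) / z := (hev y hy).mono d1
    rw [e.deriv_eq,
      ((((hA y hy).fun_sub (hf y hy))).fun_div (hasDerivAt_id' y) hy.ne').deriv]
    field_simp
    ring
  have d3 : deriv (deriv (deriv f)) x
      = ((((2 * N + a - x) * (x * f x + (2 * N + a - x) * A x) - 4 * N * (N + a) * A x) / x
          - 2 * (B x / x) + 2 * ((A x - f x) / x)) * x ^ 2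
          - (B x - 2 * A x + 2 * f x) * (2 * x)) / (x ^ 2) ^ 2 := by
    have e : deriv (deriv f) =ᶠ[𝓝 x] fun z => (B z - 2 * A z + 2 * f z) / z ^ 2 :=
      (hev x hx).mono d2
    rw [e.deriv_eq, ((((hB x hx).fun_sub ((hA x hx).const_mul 2)).fun_add
      ((hf x hx).const_mul 2)).fun_div (hasDerivAt_pow 2 x) (by positivity)).deriv]
    norm_num
  have i2 : iteratedDeriv 2 f = deriv (deriv f) := by
    simp [iteratedDeriv_succ, iteratedDeriv_zero]
  have i3 : iteratedDeriv 3 f = deriv (deriv (deriv f)) := by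
    simp [iteratedDeriv_succ, iteratedDeriv_zero]
  rw [i2, i3, d3, d2 x hx, d1 x hx]
  field_simp
  ring

lemma hasDerivAt_weight (a : ℝ) {x : ℝ} (hx : 0 < x) :
    HasDerivAt (fun x : ℝ => x ^ a * Real.exp (-x))
      ((a - x) / x * (x ^ a * Real.exp (-x))) x := by
  have h := (Real.hasDerivAt_rpow_const (x := x) (p := a) (Or.inl hx.ne')).fun_mul
    ((hasDerivAt_neg x).exp)
  refine h.congr_deriv ?_
  rw [Real.rpow_sub_one hx.ne']
  field_simp
  ring

/-- The LUE spectral density `σ = ρ_N^L` satisfies the third-order linear ODE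
`x³σ''' + 4x²σ'' - x(x² - 2(2N+a)x + a² - 2)σ' + ((2N+a)x - a²)σ = 0` on `(0,∞)`. -/
theorem rhoL_linear_ode (a : ℝ) (ha : -1 < a) (N : ℕ) (hN : 1 ≤ N)
    (x : ℝ) (hx : 0 < x) :
    x ^ 3 * iteratedDeriv 3 (rhoL a N) x + 4 * x ^ 2 * iteratedDeriv 2 (rhoL a N) x
      - x * (x ^ 2 - 2 * (2 * N + a) * x + a ^ 2 - 2) * deriv (rhoL a N) x
      + ((2 * N + a) * x - a ^ 2) * rhoL a N x = 0 := by
  obtain ⟨n, rfl⟩ : ∃ n, N = n + 1 := ⟨N - 1, by omega⟩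
  set u := laguerreP a (n + 1) with hu
  set v := laguerreP a n with hv
  set w : ℝ → ℝ := fun x => x ^ a * Real.exp (-x) with hw
  set c : ℝ := (n + 1)! / Real.Gamma (a + n + 1) with hc
  have du : ∀ y, 0 < y → HasDerivAt u (((n + 1) * u y - (n + 1 + a) * v y) / y) y := by
    intro y hy
    refine (laguerreP_differentiable a (n + 1) y).hasDerivAt.congr_deriv ?_
    rw [eq_div_iff hy.ne', mul_comm, laguerreP_deriv_succ ha]
  have dv : ∀ y, 0 < y → HasDerivAt v (((n + 1) * u y - (n + 1 + a - y) * v y) / y) y := by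
    intro y hy
    refine (laguerreP_differentiable a n y).hasDerivAt.congr_deriv ?_
    rw [eq_div_iff hy.ne', mul_comm, laguerreP_deriv ha]
  have dw : ∀ y, 0 < y → HasDerivAt w ((a - y) / y * w y) y := fun y hy => hasDerivAt_weight a hy
  have cd : ∀ y, 0 < y → rhoL a (n + 1) y = c * (w y * ((n + 1) * u y ^ 2
      - (2 * (n + 1) + a - y) * (u y * v y) + (n + 1 + a) * v y ^ 2)) / y := by
    intro y hy
    have h := christoffel_darboux ha n y
    rw [eq_div_iff hy.ne']
    unfold rhoL
    linear_combination w y * h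
  refine ode_of_system (A := fun y => c * (w y * (u y * v y)))
    (B := fun y => c * (w y * ((n + 1) * u y ^ 2 - (n + 1 + a) * v y ^ 2))) ?_ ?_ ?_ hx
  · intro y hy
    have e : rhoL a (n + 1) =ᶠ[𝓝 y] fun y => c * (w y * ((n + 1) * u y ^ 2
        - (2 * (n + 1) + a - y) * (u y * v y) + (n + 1 + a) * v y ^ 2)) / y :=
      (lt_mem_nhds hy).mono cd
    have hlin : HasDerivAt (fun y : ℝ => 2 * ((n : ℝ) + 1) + a - y) (-1) y := by
      simpa using (hasDerivAt_id' y).const_sub (2 * ((n : ℝ) + 1) + a)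
    have h := ((((dw y hy).fun_mul (((((du y hy).fun_pow 2).const_mul ((n : ℝ) + 1)).fun_sub
      (hlin.fun_mul ((du y hy).fun_mul (dv y hy)))).fun_add
      (((dv y hy).fun_pow 2).const_mul ((n : ℝ) + 1 + a)))).const_mul c).fun_div
      (hasDerivAt_id' y) hy.ne')
    refine (h.congr_of_eventuallyEq e).congr_deriv ?_
    rw [cd y hy]
    push_cast
    field_simp
    ring
  · intro y hy
    refine (((dw y hy).fun_mul ((du y hy).fun_mul (dv y hy))).const_mul c).congr_deriv ?_
    field_simp
    ring
  · intro y hy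
    refine (((dw y hy).fun_mul ((((du y hy).fun_pow 2).const_mul ((n : ℝ) + 1)).fun_sub
      (((dv y hy).fun_pow 2).const_mul ((n : ℝ) + 1 + a)))).const_mul c).congr_deriv ?_
    rw [cd y hy]
    push_cast
    field_simp
    ring
end
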